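/- Let γ : [0,1] → ℝ^d be a continuous arc whose total curvature satisfies TC(γ) ≤ α for some α < π. Then γ is rectifiable, and for all 0 ≤ s < t ≤ 1 with γ(s) ≠ γ(t), Len(γ|[s,t]) ≤ ‖γ(t) − γ(s)‖ / cos(α/2). In particular, the distortion of γ is at most sec(α/2). -/

import Mathlib

open Set Filter MeasureTheory
open scoped ENNReal NNReal RealInnerProductSpace

noncomputable section

/-- The parameters `u 0 < u 1 < ⋯ < u m` of a polygon inscribed in (the restriction to
`[a,b]` of) a curve: strictly increasing parameters lying in `[a,b]`. -/
def InscribedIn (a b : ℝ) (m : ℕ) (u : ℕ → ℝ) : Prop :=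
  (∀ i < m, u i < u (i + 1)) ∧ ∀ i ≤ m, u i ∈ Set.Icc a b

/-- The length of the polygon inscribed in the curve `γ` with parameters `u 0, …, u m`:
the sum of the euclidean lengths of its edges. -/
def polyLen {E : Type*} [NormedAddCommGroup E] (γ : ℝ → E) (m : ℕ) (u : ℕ → ℝ) : ℝ :=
  ∑ i ∈ Finset.range m, ‖γ (u (i + 1)) - γ (u i)‖

/-- The (Jordan) length of the arc `γ : [a,b] → E`: the supremum of the lengths of all
inscribed polygons, valued in `[0,∞]`. -/
def arcLen {E : Type*} [NormedAddCommGroup E] (γ : ℝ → E) (a b : ℝ) : ℝ≥0∞ :=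
  ⨆ (m : ℕ) (u : ℕ → ℝ) (_ : InscribedIn a b m u), ENNReal.ofReal (polyLen γ m u)

/-- The list of vertices of the polygon inscribed in `γ` with parameters `u 0, …, u m`. -/
def vertexList {E : Type*} (γ : ℝ → E) (m : ℕ) (u : ℕ → ℝ) : List E :=
  (List.range (m + 1)).map fun i => γ (u i)

/-- Collapse consecutive equal entries of a list to single entries. -/
def collapse {E : Type*} (l : List E) : List E :=
  @List.destutter E (· ≠ ·) (Classical.decRel _) l

/-- The sum of the turning angles of a polygon given by its list of vertices: at each
interior vertex, the angle in `[0,π]` between the incoming and outgoing edge vectors. -/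
def turnSum {E : Type*} [NormedAddCommGroup E] [InnerProductSpace ℝ E] : List E → ℝ
  | a :: b :: c :: l => InnerProductGeometry.angle (b - a) (c - b) + turnSum (b :: c :: l)
  | _ => 0

/-- The sum, at each interior vertex, of the euclidean distance `‖u₊ - u₋‖` between the
unit tangent vectors of the incoming and outgoing edges (so a corner of turning angle θ
contributes `2 sin(θ/2)`). -/
def starSum {E : Type*} [NormedAddCommGroup E] [InnerProductSpace ℝ E] : List E → ℝ
  | a :: b :: c :: l =>
      ‖(‖c - b‖⁻¹ • (c - b)) - (‖b - a‖⁻¹ • (b - a))‖ + starSum (b :: c :: l)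
  | _ => 0

/-- The total curvature of the polygon inscribed in `γ` with parameters `u 0, …, u m`:
after collapsing consecutive equal vertices, the sum of its turning angles. -/
def polyTC {E : Type*} [NormedAddCommGroup E] [InnerProductSpace ℝ E]
    (γ : ℝ → E) (m : ℕ) (u : ℕ → ℝ) : ℝ :=
  turnSum (collapse (vertexList γ m u))

/-- The total curvature of the arc `γ : [a,b] → E`: the supremum over all inscribed
polygons of their total curvature, valued in `[0,∞]`. -/
def arcTC {E : Type*} [NormedAddCommGroup E] [InnerProductSpace ℝ E]
    (γ : ℝ → E) (a b : ℝ) : ℝ≥0∞ :=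
  ⨆ (m : ℕ) (u : ℕ → ℝ) (_ : InscribedIn a b m u), ENNReal.ofReal (polyTC γ m u)

/-- The euclidean total curvature `TC*` of the polygon inscribed in `γ` with parameters
`u 0, …, u m`. -/
def polyTCStar {E : Type*} [NormedAddCommGroup E] [InnerProductSpace ℝ E]
    (γ : ℝ → E) (m : ℕ) (u : ℕ → ℝ) : ℝ :=
  starSum (collapse (vertexList γ m u))

/-- The euclidean total curvature `TC*` of the arc `γ : [a,b] → E`. -/
def arcTCStar {E : Type*} [NormedAddCommGroup E] [InnerProductSpace ℝ E]
    (γ : ℝ → E) (a b : ℝ) : ℝ≥0∞ :=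
  ⨆ (m : ℕ) (u : ℕ → ℝ) (_ : InscribedIn a b m u), ENNReal.ofReal (polyTCStar γ m u)

/-- Cyclically ordered parameters `u 0 < ⋯ < u m` in `[0,1)` of a polygon inscribed in a
loop `γ : ℝ/ℤ → E`. -/
def LoopInscribed (m : ℕ) (u : ℕ → ℝ) : Prop :=
  (∀ i < m, u i < u (i + 1)) ∧ ∀ i ≤ m, u i ∈ Set.Ico (0 : ℝ) 1

/-- The list of vertices of the polygon inscribed in the loop `γ` with parameters
`u 0, …, u m`. -/
def loopVertexList {E : Type*} (γ : AddCircle (1 : ℝ) → E) (m : ℕ) (u : ℕ → ℝ) : List E :=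
  (List.range (m + 1)).map fun i => γ (u i : ℝ)

/-- The sum of the lengths of the successive edges of a list of points. -/
def lenList {E : Type*} [NormedAddCommGroup E] : List E → ℝ
  | a :: b :: l => ‖b - a‖ + lenList (b :: l)
  | _ => 0

/-- The length of the closed polygon inscribed in the loop `γ` with parameters
`u 0, …, u m`: the sum of the edge lengths, indices taken cyclically. -/
def loopPolyLen {E : Type*} [NormedAddCommGroup E]
    (γ : AddCircle (1 : ℝ) → E) (m : ℕ) (u : ℕ → ℝ) : ℝ :=
  lenList (loopVertexList γ m u ++ (loopVertexList γ m u).take 1)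

/-- The length of a loop `γ : ℝ/ℤ → E`: the supremum of the lengths of inscribed closed
polygons, valued in `[0,∞]`. -/
def loopLen {E : Type*} [NormedAddCommGroup E] (γ : AddCircle (1 : ℝ) → E) : ℝ≥0∞ :=
  ⨆ (m : ℕ) (u : ℕ → ℝ) (_ : LoopInscribed m u), ENNReal.ofReal (loopPolyLen γ m u)

open Classical in
/-- Collapse consecutive equal vertices of a *cyclic* list of vertices: collapse
consecutive duplicates, also across the wrap-around. -/
def cyclicCollapse {E : Type*} (l : List E) : List E :=
  if 2 ≤ (collapse l).length ∧ (collapse l).getLast? = (collapse l).head? then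
    (collapse l).dropLast
  else collapse l

/-- The total curvature of the closed polygon inscribed in the loop `γ` with parameters
`u 0, …, u m`: after cyclically collapsing consecutive equal vertices, the sum of the
turning angles at all of its vertices (every vertex of a closed polygon is interior). -/
def loopPolyTC {E : Type*} [NormedAddCommGroup E] [InnerProductSpace ℝ E]
    (γ : AddCircle (1 : ℝ) → E) (m : ℕ) (u : ℕ → ℝ) : ℝ :=
  turnSum (cyclicCollapse (loopVertexList γ m u) ++
    (cyclicCollapse (loopVertexList γ m u)).take 2)

/-- The total curvature of a loop `γ : ℝ/ℤ → E`: the supremum over all inscribed closed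
polygons of their total curvature, valued in `[0,∞]`. -/
def loopTC {E : Type*} [NormedAddCommGroup E] [InnerProductSpace ℝ E]
    (γ : AddCircle (1 : ℝ) → E) : ℝ≥0∞ :=
  ⨆ (m : ℕ) (u : ℕ → ℝ) (_ : LoopInscribed m u), ENNReal.ofReal (loopPolyTC γ m u)

/-- The euclidean total curvature `TC*` of the closed inscribed polygon. -/
def loopPolyTCStar {E : Type*} [NormedAddCommGroup E] [InnerProductSpace ℝ E]
    (γ : AddCircle (1 : ℝ) → E) (m : ℕ) (u : ℕ → ℝ) : ℝ :=
  starSum (cyclicCollapse (loopVertexList γ m u) ++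
    (cyclicCollapse (loopVertexList γ m u)).take 2)

/-- The euclidean total curvature `TC*` of a loop `γ : ℝ/ℤ → E`. -/
def loopTCStar {E : Type*} [NormedAddCommGroup E] [InnerProductSpace ℝ E]
    (γ : AddCircle (1 : ℝ) → E) : ℝ≥0∞ :=
  ⨆ (m : ℕ) (u : ℕ → ℝ) (_ : LoopInscribed m u), ENNReal.ofReal (loopPolyTCStar γ m u)

end

/-- The (Gromov) distortion of the arc `γ : [0,1] → E`: the supremum of
`Len(γ|[s,t]) / ‖γ t - γ s‖` over `0 ≤ s < t ≤ 1` with `γ s ≠ γ t`, valued in `[0,∞]`. -/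
noncomputable def disto {E : Type*} [NormedAddCommGroup E] (γ : ℝ → E) : ℝ≥0∞ :=
  ⨆ (s : ℝ) (t : ℝ) (_ : 0 ≤ s ∧ s < t ∧ t ≤ 1 ∧ γ s ≠ γ t),
    arcLen γ s t / ENNReal.ofReal ‖γ t - γ s‖

/-!
The sum of the unit tangents at the two ends of a polygon makes an angle of at most half the total
curvature with every edge. Let `x` and `z` be the unit tangents at the ends and `y` that of any
edge. The triangle inequality for angles bounds `∠ x y + ∠ y z` by the total curvature, hence by
`α`, and `|∠ x y - ∠ y z|` by `∠ x z`. Since `‖x + z‖ = 2 cos (∠ x z / 2)`,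

  `⟪x + z, y⟫ = cos (∠ x y) + cos (∠ y z)`
  `           = 2 cos ((∠ x y + ∠ y z) / 2) cos ((∠ x y - ∠ y z) / 2) ≥ cos (α / 2) ‖x + z‖`.

Weighting by edge lengths and summing, the chord is at least `cos (α / 2)` times the length of the
polygon.
-/

section Vectors

open InnerProductGeometry

variable {E : Type*} [NormedAddCommGroup E] [InnerProductSpace ℝ E]

/-- A vector bisecting the angle between `x` and `z`. Weighting by the opposite norms, rather than
normalizing, avoids division and gives `0` when `x` or `z` vanishes. -/
def bisector (x z : E) : E := ‖z‖ • x + ‖x‖ • z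

theorem norm_bisector (x z : E) : ‖bisector x z‖ = 2 * ‖x‖ * ‖z‖ * Real.cos (angle x z / 2) := by
  have hcos : 0 ≤ Real.cos (angle x z / 2) :=
    Real.cos_nonneg_of_mem_Icc
      ⟨by linarith [angle_nonneg x z, Real.pi_pos], by linarith [angle_le_pi x z]⟩
  have hdouble : Real.cos (angle x z) = 2 * Real.cos (angle x z / 2) ^ 2 - 1 := by
    rw [← Real.cos_two_mul, mul_div_cancel₀ _ two_ne_zero]
  refine (sq_eq_sq₀ (norm_nonneg _) (by positivity)).1 ?_
  rw [bisector, norm_add_sq_real, real_inner_smul_left, real_inner_smul_right,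
    ← cos_angle_mul_norm_mul_norm x z, hdouble, norm_smul, norm_smul, norm_norm, norm_norm]
  ring

theorem inner_bisector_left (x y z : E) :
    ⟪bisector x z, y⟫ =
      ‖x‖ * ‖z‖ * ‖y‖ * (Real.cos (angle x y) + Real.cos (angle y z)) := by
  rw [bisector, inner_add_left, real_inner_smul_left, real_inner_smul_left, angle_comm y z,
    ← cos_angle_mul_norm_mul_norm x y, ← cos_angle_mul_norm_mul_norm z y]
  ring

theorem two_mul_cos_mul_cos_le_cos_add_cos {x y z : E} (h : angle x y + angle y z ≤ Real.pi) :
    2 * Real.cos ((angle x y + angle y z) / 2) * Real.cos (angle x z / 2) ≤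
      Real.cos (angle x y) + Real.cos (angle y z) := by
  have hsum : 0 ≤ Real.cos ((angle x y + angle y z) / 2) :=
    Real.cos_nonneg_of_mem_Icc
      ⟨by linarith [angle_nonneg x y, angle_nonneg y z, Real.pi_pos], by linarith⟩
  have hdiff : |(angle x y - angle y z) / 2| ≤ angle x z / 2 := by
    have hxy := angle_le_angle_add_angle x z y
    have hyz := angle_le_angle_add_angle y x z
    rw [angle_comm z y] at hxy
    rw [angle_comm y x] at hyz
    exact abs_le.2 ⟨by linarith, by linarith⟩
  have hcos : Real.cos (angle x z / 2) ≤ Real.cos ((angle x y - angle y z) / 2) := by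
    rw [← Real.cos_abs ((angle x y - angle y z) / 2)]
    exact Real.cos_le_cos_of_nonneg_of_le_pi (abs_nonneg _)
      (by linarith [angle_le_pi x z, Real.pi_pos]) hdiff
  rw [Real.cos_add_cos]
  gcongr

theorem cos_half_mul_norm_mul_norm_bisector_le_inner {x y z : E} {α : ℝ} (hα : α ≤ Real.pi)
    (h : angle x y + angle y z ≤ α) :
    Real.cos (α / 2) * ‖bisector x z‖ * ‖y‖ ≤ ⟪bisector x z, y⟫ := by
  have hmono : Real.cos (α / 2) ≤ Real.cos ((angle x y + angle y z) / 2) :=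
    Real.cos_le_cos_of_nonneg_of_le_pi (by linarith [angle_nonneg x y, angle_nonneg y z])
      (by linarith [Real.pi_pos]) (by linarith)
  calc Real.cos (α / 2) * ‖bisector x z‖ * ‖y‖
      ≤ Real.cos ((angle x y + angle y z) / 2) * ‖bisector x z‖ * ‖y‖ := by gcongr
    _ = ‖x‖ * ‖z‖ * ‖y‖ *
          (2 * Real.cos ((angle x y + angle y z) / 2) * Real.cos (angle x z / 2)) := by
        rw [norm_bisector]; ring
    _ ≤ ‖x‖ * ‖z‖ * ‖y‖ * (Real.cos (angle x y) + Real.cos (angle y z)) := by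
        gcongr
        exact two_mul_cos_mul_cos_le_cos_add_cos (h.trans hα)
    _ = ⟪bisector x z, y⟫ := (inner_bisector_left x y z).symm

/-- The sum of the angles between consecutive vectors of a list: the total curvature of a polygon
in terms of its edge vectors. -/
noncomputable def turningAngleSum : List E → ℝ
  | x :: y :: l => angle x y + turningAngleSum (y :: l)
  | _ => 0

theorem angle_add_angle_getLastD_le_turningAngleSum {x : E} {l : List E}
    (hne : ∀ e ∈ x :: l, e ≠ 0) {y : E} (hy : y ∈ x :: l) :
    angle x y + angle y (l.getLastD x) ≤ turningAngleSum (x :: l) := by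
  induction l generalizing x y with
  | nil =>
    obtain rfl := List.mem_singleton.1 hy
    simp [turningAngleSum, angle_self (hne y hy)]
  | cons z l ih =>
    have hne' : ∀ e ∈ z :: l, e ≠ 0 := fun e he => hne e (List.mem_cons_of_mem x he)
    rw [List.getLastD_cons, turningAngleSum]
    rcases List.mem_cons.1 hy with rfl | hy'
    · have hself : angle y y = 0 := angle_self (hne y hy)
      have hz := ih hne' List.mem_cons_self
      linarith [angle_le_angle_add_angle y z (l.getLastD z), angle_nonneg z z]
    · linarith [angle_le_angle_add_angle x z y, ih hne' hy']

theorem cos_half_mul_sum_norm_le_norm_sum {l : List E} (hne : ∀ e ∈ l, e ≠ 0) {α : ℝ}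
    (hα : α < Real.pi) (hl : turningAngleSum l ≤ α) :
    Real.cos (α / 2) * (l.map fun e => ‖e‖).sum ≤ ‖l.sum‖ := by
  rcases l with - | ⟨x, l⟩
  · simp only [List.map_nil, List.sum_nil, mul_zero, norm_zero, le_refl]
  set z := l.getLastD x
  have hangle : ∀ y ∈ x :: l, angle x y + angle y z ≤ α := fun y hy =>
    (angle_add_angle_getLastD_le_turningAngleSum hne hy).trans hl
  have hpos : 0 < ‖bisector x z‖ := by
    have hx : 0 < ‖x‖ := norm_pos_iff.2 (hne x List.mem_cons_self)
    have hz : 0 < ‖z‖ := norm_pos_iff.2 (hne z List.getLastD_mem_cons)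
    have hxz : angle x z ≤ α := by
      linarith [hangle x List.mem_cons_self, angle_nonneg x x]
    have hcos : 0 < Real.cos (angle x z / 2) :=
      Real.cos_pos_of_mem_Ioo ⟨by linarith [angle_nonneg x z, Real.pi_pos], by linarith⟩
    rw [norm_bisector]
    positivity
  refine le_of_mul_le_mul_left ?_ hpos
  calc ‖bisector x z‖ * (Real.cos (α / 2) * ((x :: l).map fun e => ‖e‖).sum)
      = ((x :: l).map fun e => Real.cos (α / 2) * ‖bisector x z‖ * ‖e‖).sum := by
        rw [List.sum_map_mul_left]; ring
    _ ≤ ((x :: l).map fun e => ⟪bisector x z, e⟫).sum :=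
        List.sum_le_sum fun e he =>
          cos_half_mul_norm_mul_norm_bisector_le_inner hα.le (hangle e he)
    _ = ⟪bisector x z, (x :: l).sum⟫ := (map_list_sum (innerSL ℝ (bisector x z)) _).symm
    _ ≤ ‖bisector x z‖ * ‖(x :: l).sum‖ := real_inner_le_norm _ _

end Vectors

section Edges

variable {V : Type*} [AddCommGroup V]

/-- The edge vectors of the polygon with the given list of vertices. -/
def edgeVectors : List V → List V
  | a :: b :: l => (b - a) :: edgeVectors (b :: l)
  | _ => []

theorem edgeVectors_map_range (v : ℕ → V) (m : ℕ) :
    edgeVectors ((List.range (m + 1)).map v) = (List.range m).map fun i => v (i + 1) - v i := by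
  induction m generalizing v with
  | zero => rfl
  | succ m ih =>
    have htail := ih fun i => v (i + 1)
    simp only [List.range_succ_eq_map, List.map_cons, List.map_map, edgeVectors] at htail ⊢
    exact congrArg _ htail

theorem edgeVectors_cons_destutter' [DecidableRel fun x y : V => x ≠ y] (a b : V) (l : List V) :
    edgeVectors (a :: l.destutter' (· ≠ ·) b) =
      (b - a) :: edgeVectors (l.destutter' (· ≠ ·) b) := by
  induction l with
  | nil => rfl
  | cons c l ih =>
    by_cases hbc : b ≠ c
    · rw [List.destutter'_cons_pos _ hbc, edgeVectors]
    · rw [List.destutter'_cons_neg _ hbc, ih]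

theorem edgeVectors_destutter' [DecidableRel fun x y : V => x ≠ y]
    [DecidablePred fun e : V => e ≠ 0] (a : V) (l : List V) :
    edgeVectors (l.destutter' (· ≠ ·) a) = (edgeVectors (a :: l)).filter (· ≠ 0) := by
  induction l generalizing a with
  | nil => rfl
  | cons b l ih =>
    by_cases hab : a ≠ b
    · rw [List.destutter'_cons_pos _ hab, edgeVectors_cons_destutter', ih, edgeVectors,
        List.filter_cons_of_pos (by simpa using sub_ne_zero.2 hab.symm)]
    · rw [List.destutter'_cons_neg _ hab, ih]
      obtain rfl := not_ne_iff.1 hab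
      rw [edgeVectors, List.filter_cons_of_neg (by simp)]

theorem edgeVectors_collapse [DecidablePred fun e : V => e ≠ 0] (l : List V) :
    edgeVectors (collapse l) = (edgeVectors l).filter (· ≠ 0) := by
  cases l with
  | nil => rfl
  | cons a l => exact @edgeVectors_destutter' V _ (Classical.decRel _) _ a l

theorem sum_map_filter_ne_zero {X M : Type*} [Zero X] [AddMonoid M]
    [DecidablePred fun x : X => x ≠ 0] {f : X → M} (hf : f 0 = 0) (l : List X) :
    ((l.filter (· ≠ 0)).map f).sum = (l.map f).sum := by
  induction l with
  | nil => rfl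
  | cons a l ih =>
    by_cases ha : a ≠ 0
    · rw [List.filter_cons_of_pos (by simpa using ha), List.map_cons, List.map_cons,
        List.sum_cons, List.sum_cons, ih]
    · rw [List.filter_cons_of_neg (by simpa using ha), ih, not_ne_iff.1 ha, List.map_cons,
        List.sum_cons, hf, zero_add]

end Edges

section Polygons

variable {E : Type*} [NormedAddCommGroup E]

theorem polyLen_eq_sum_norm_edgeVectors (γ : ℝ → E) (m : ℕ) (u : ℕ → ℝ) :
    polyLen γ m u = ((edgeVectors (collapse (vertexList γ m u))).map fun e => ‖e‖).sum := by
  classical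
  rw [edgeVectors_collapse, sum_map_filter_ne_zero norm_zero, vertexList, edgeVectors_map_range,
    List.map_map]
  rfl

theorem sum_edgeVectors_collapse_vertexList (γ : ℝ → E) (m : ℕ) (u : ℕ → ℝ) :
    (edgeVectors (collapse (vertexList γ m u))).sum = γ (u m) - γ (u 0) := by
  classical
  rw [edgeVectors_collapse, ← List.map_id (List.filter _ _), sum_map_filter_ne_zero rfl,
    List.map_id, vertexList, edgeVectors_map_range]
  exact Finset.sum_range_sub (fun i => γ (u i)) m

variable [InnerProductSpace ℝ E]

theorem turnSum_eq_turningAngleSum_edgeVectors :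
    ∀ l : List E, turnSum l = turningAngleSum (edgeVectors l)
  | a :: b :: c :: l => by
    rw [turnSum, turnSum_eq_turningAngleSum_edgeVectors (b :: c :: l)]
    rfl
  | [] | [_] | [_, _] => rfl

theorem cos_half_mul_polyLen_le_norm_sub (γ : ℝ → E) (m : ℕ) (u : ℕ → ℝ) {α : ℝ}
    (hα : α < Real.pi) (hTC : polyTC γ m u ≤ α) :
    Real.cos (α / 2) * polyLen γ m u ≤ ‖γ (u m) - γ (u 0)‖ := by
  classical
  have hne : ∀ e ∈ edgeVectors (collapse (vertexList γ m u)), e ≠ 0 := fun e he => by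
    rw [edgeVectors_collapse] at he
    simpa using List.of_mem_filter he
  rw [polyTC, turnSum_eq_turningAngleSum_edgeVectors] at hTC
  rw [polyLen_eq_sum_norm_edgeVectors, ← sum_edgeVectors_collapse_vertexList]
  exact cos_half_mul_sum_norm_le_norm_sum hne hα hTC

end Polygons

section Arcs

variable {E : Type*} [NormedAddCommGroup E]

theorem InscribedIn.mono {a b s t : ℝ} {m : ℕ} {u : ℕ → ℝ} (hu : InscribedIn s t m u)
    (ha : a ≤ s) (hb : t ≤ b) : InscribedIn a b m u :=
  ⟨hu.1, fun i hi => Set.Icc_subset_Icc ha hb (hu.2 i hi)⟩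

theorem InscribedIn.exists_zero_eq_left {a b : ℝ} {m : ℕ} {u : ℕ → ℝ} (hu : InscribedIn a b m u)
    (γ : ℝ → E) :
    ∃ m' u', InscribedIn a b m' u' ∧ u' 0 = a ∧ polyLen γ m u ≤ polyLen γ m' u' := by
  have h0 := hu.2 0 m.zero_le
  rcases h0.1.eq_or_lt with heq | hlt
  · exact ⟨m, u, hu, heq.symm, le_rfl⟩
  refine ⟨m + 1, fun i => i.casesOn a u, ⟨?_, ?_⟩, rfl, ?_⟩
  · rintro (_ | i) hi
    · exact hlt
    · exact hu.1 i (Nat.lt_of_succ_lt_succ hi)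
  · rintro (_ | i) hi
    · exact ⟨le_rfl, h0.1.trans h0.2⟩
    · exact hu.2 i (Nat.le_of_succ_le_succ hi)
  · rw [polyLen, polyLen, Finset.sum_range_succ']
    exact le_add_of_nonneg_right (norm_nonneg _)

theorem InscribedIn.exists_last_eq_right {a b : ℝ} {m : ℕ} {u : ℕ → ℝ} (hu : InscribedIn a b m u)
    (γ : ℝ → E) :
    ∃ m' u', InscribedIn a b m' u' ∧ u' 0 = u 0 ∧ u' m' = b ∧
      polyLen γ m u ≤ polyLen γ m' u' := by
  have hm := hu.2 m le_rfl
  rcases hm.2.eq_or_lt with heq | hlt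
  · exact ⟨m, u, hu, rfl, heq, le_rfl⟩
  have hlast : Function.update u (m + 1) b (m + 1) = b := Function.update_self ..
  have hinit : ∀ i ≤ m, Function.update u (m + 1) b i = u i := fun i hi =>
    Function.update_of_ne (by omega) ..
  refine ⟨m + 1, Function.update u (m + 1) b, ⟨fun i hi => ?_, fun i hi => ?_⟩,
    hinit 0 m.zero_le, hlast, ?_⟩
  · rcases (Nat.le_of_lt_succ hi).eq_or_lt with rfl | hi'
    · rwa [hlast, hinit i le_rfl]
    · rw [hinit i hi'.le, hinit (i + 1) hi']
      exact hu.1 i hi'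
  · rcases hi.eq_or_lt with rfl | hi'
    · rw [hlast]
      exact ⟨hm.1.trans hm.2, le_rfl⟩
    · rw [hinit i (Nat.le_of_lt_succ hi')]
      exact hu.2 i (Nat.le_of_lt_succ hi')
  · calc polyLen γ m u = polyLen γ m (Function.update u (m + 1) b) :=
          Finset.sum_congr rfl fun i hi => by
            rw [hinit i (Finset.mem_range.1 hi).le, hinit (i + 1) (Finset.mem_range.1 hi)]
      _ ≤ polyLen γ (m + 1) (Function.update u (m + 1) b) := by
          rw [polyLen, polyLen, Finset.sum_range_succ]
          exact le_add_of_nonneg_right (norm_nonneg _)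

theorem disto_le_of_forall_arcLen_le {γ : ℝ → E} {C : ℝ≥0∞}
    (h : ∀ s t : ℝ, 0 ≤ s → s < t → t ≤ 1 → γ s ≠ γ t →
      arcLen γ s t ≤ C * ENNReal.ofReal ‖γ t - γ s‖) :
    disto γ ≤ C :=
  iSup₂_le fun s t => iSup_le fun ⟨hs, hst, ht, hne⟩ =>
    ENNReal.div_le_of_le_mul (h s t hs hst ht hne)

variable [InnerProductSpace ℝ E]

theorem InscribedIn.ofReal_polyTC_le_arcTC {a b : ℝ} {m : ℕ} {u : ℕ → ℝ}
    (hu : InscribedIn a b m u) (γ : ℝ → E) : ENNReal.ofReal (polyTC γ m u) ≤ arcTC γ a b :=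
  le_iSup_of_le m (le_iSup₂_of_le u hu le_rfl)

theorem arcTC_mono (γ : ℝ → E) {a b s t : ℝ} (ha : a ≤ s) (hb : t ≤ b) :
    arcTC γ s t ≤ arcTC γ a b :=
  iSup₂_le fun _ _ => iSup_le fun hu => (hu.mono ha hb).ofReal_polyTC_le_arcTC γ

theorem arcLen_le_of_arcTC_le {γ : ℝ → E} {a b α : ℝ} (hα0 : 0 ≤ α) (hα : α < Real.pi)
    (hTC : arcTC γ a b ≤ ENNReal.ofReal α) :
    arcLen γ a b ≤ ENNReal.ofReal (‖γ b - γ a‖ / Real.cos (α / 2)) := by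
  have hcos : 0 < Real.cos (α / 2) := Real.cos_pos_of_mem_Ioo ⟨by linarith, by linarith⟩
  refine iSup₂_le fun m u => iSup_le fun hu => ENNReal.ofReal_le_ofReal ?_
  obtain ⟨m₁, u₁, hu₁, hleft₁, hlen₁⟩ := hu.exists_zero_eq_left γ
  obtain ⟨m₂, u₂, hu₂, hleft₂, hright₂, hlen₂⟩ := hu₁.exists_last_eq_right γ
  have hpolyTC : polyTC γ m₂ u₂ ≤ α :=
    (ENNReal.ofReal_le_ofReal_iff hα0).1 ((hu₂.ofReal_polyTC_le_arcTC γ).trans hTC)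
  have hchord := cos_half_mul_polyLen_le_norm_sub γ m₂ u₂ hα hpolyTC
  rw [hright₂, hleft₂, hleft₁] at hchord
  exact (hlen₁.trans hlen₂).trans ((le_div_iff₀' hcos).2 hchord)

theorem distortion_le_of_tc_lt_pi_general (γ : ℝ → E) {α : ℝ} (hα0 : 0 ≤ α) (hα : α < Real.pi)
    (hTC : arcTC γ 0 1 ≤ ENNReal.ofReal α) :
    arcLen γ 0 1 ≠ ⊤ ∧
    (∀ s t : ℝ, 0 ≤ s → s ≤ t → t ≤ 1 →
      arcLen γ s t ≤ ENNReal.ofReal (‖γ t - γ s‖ / Real.cos (α / 2))) ∧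
    disto γ ≤ ENNReal.ofReal (1 / Real.cos (α / 2)) := by
  have hlen : ∀ s t : ℝ, 0 ≤ s → t ≤ 1 →
      arcLen γ s t ≤ ENNReal.ofReal (‖γ t - γ s‖ / Real.cos (α / 2)) := fun s t hs ht =>
    arcLen_le_of_arcTC_le hα0 hα ((arcTC_mono γ hs ht).trans hTC)
  refine ⟨ne_top_of_le_ne_top ENNReal.ofReal_ne_top (hlen 0 1 le_rfl le_rfl),
    fun s t hs _ ht => hlen s t hs ht,
    disto_le_of_forall_arcLen_le fun s t hs _ ht _ => (hlen s t hs ht).trans_eq ?_⟩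
  rw [← ENNReal.ofReal_mul' (norm_nonneg _), one_div_mul_eq_div]

end Arcs

/-- a continuous arc `γ : [0,1] → ℝᵈ` with total curvature at most
`α < π` is rectifiable, satisfies `Len(γ|[s,t]) ≤ ‖γ t - γ s‖ / cos(α/2)` whenever
`γ s ≠ γ t`, and in particular has distortion at most `sec(α/2)`. -/
theorem distortion_le_of_tc_lt_pi (d : ℕ) (γ : ℝ → EuclideanSpace ℝ (Fin d))
    (hγ : ContinuousOn γ (Set.Icc 0 1)) (α : ℝ) (hα0 : 0 ≤ α) (hα : α < Real.pi)
    (hTC : arcTC γ 0 1 ≤ ENNReal.ofReal α) :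
    arcLen γ 0 1 ≠ ⊤ ∧
    (∀ s t : ℝ, 0 ≤ s → s < t → t ≤ 1 → γ s ≠ γ t →
      arcLen γ s t ≤ ENNReal.ofReal (‖γ t - γ s‖ / Real.cos (α / 2))) ∧
    disto γ ≤ ENNReal.ofReal (1 / Real.cos (α / 2)) := by
  obtain ⟨hrect, hlen, hdisto⟩ := distortion_le_of_tc_lt_pi_general γ hα0 hα hTC
  exact ⟨hrect, fun s t hs hst ht _ => hlen s t hs hst.le ht, hdisto⟩
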